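/- Let μ > −3/2, −1/2 < ν < μ+1 and 0 < β < 1. Then for all x > 0, ∫_0^x e^{−βu} u^ν t̃_{μ,ν}(u) du < ((μ+ν+3+A_{μ,ν})/((2ν+1)(1−β))) · e^{−βx} x^ν t̃_{μ+1,ν+1}(x). -/

import Mathlib

/-!
Write `t = t_{μ,ν}`, `T = t_{μ+1,ν+1}`, `q = 2ν + 1 > 0`, `L(x) = ∫₀ˣ e^{-βu} u^ν t(u) du` and
`G(x) = e^{-βx} x^ν T(x)`. The constant `μ + ν + 3 + A_{μ,ν}` exceeds `q + 2`
(`two_mul_add_three_lt_const`), so it suffices to prove `L ≤ K G` with `K = (q + 2) / (q (1 - β))`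
(`integral_le_of_system`).

Termwise differentiation of the series gives `T' = t - (ν+1) T / x` and `t' ≥ ν t / x + T`
(`lommelEntire_contiguous`, `lommelEntire_contiguous_le`). The first
relation, with the positivity of the coefficients, gives `T ≤ x t / (μ+ν+3)`; both together give
`T ≤ t` (`mul_le_of_system`) and
`(e^{-βx} x^{ν+1} (t + T))' ≥ q e^{-βx} x^ν t`, so that `q L ≤ e^{-βx} x^{ν+1} (t + T)`.

The derivative of `F = K G - L` need not be nonnegative everywhere. At a point where `F < 0`, however,
the last inequality yields `(q + 2) T < (1 - β) x (t + T)`; inserting this lower bound for `1 - β`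
into `F'` reduces `F' ≥ 0` to `(t - T) (x t + x T - (q + 1) T) ≥ 0`, which follows from the ratio
bounds. Since `F(0) = 0` and `F` does not decrease where it is negative, `F ≥ 0`
(`nonneg_of_deriv_nonneg_of_neg`).

To stay with functions that are smooth at the origin, `t` and `T` are written as powers of `x` times
values of the entire function `lommelEntire` at `x² / 4`.
-/

open Real MeasureTheory

/-- Normalised modified Lommel function of the first kind. -/
noncomputable def lommel (μ ν x : ℝ) : ℝ :=
  ∑' k : ℕ, (x / 2) ^ (μ + 2 * (k : ℝ) + 1) /
    (Real.Gamma ((k : ℝ) + (μ - ν + 3) / 2) * Real.Gamma ((k : ℝ) + (μ + ν + 3) / 2))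

/-! ### The entire function carrying the Lommel series -/

/-- The `k`-th coefficient `1 / (Γ(k+a) Γ(k+b))` of `lommelEntire`. -/
noncomputable def lommelCoeff (a b : ℝ) (k : ℕ) : ℝ :=
  1 / (Real.Gamma ((k : ℝ) + a) * Real.Gamma ((k : ℝ) + b))

/-- The entire function `y ↦ ∑ yᵏ / (Γ(k+a) Γ(k+b))`; the Lommel function is a power of `x / 2` times
this function at `y = x² / 4`. -/
noncomputable def lommelEntire (a b y : ℝ) : ℝ := ∑' k : ℕ, lommelCoeff a b k * y ^ k

/-- The termwise derivative of `lommelEntire` (with the junk exponent at `k = 0` multiplied by `0`). -/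
noncomputable def lommelEntireDeriv (a b y : ℝ) : ℝ :=
  ∑' k : ℕ, lommelCoeff a b k * (k * y ^ (k - 1))

lemma lommelCoeff_pos {a b : ℝ} (ha : 1 < a) (hb : 1 / 2 < b) (k : ℕ) : 0 < lommelCoeff a b k := by
  have hk : (0 : ℝ) ≤ k := k.cast_nonneg
  have h1 := Real.Gamma_pos_of_pos (show 0 < (k : ℝ) + a by linarith)
  have h2 := Real.Gamma_pos_of_pos (show 0 < (k : ℝ) + b by linarith)
  unfold lommelCoeff
  positivity

lemma lommelCoeff_succ {a b : ℝ} (ha : 1 < a) (hb : 1 / 2 < b) (k : ℕ) :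
    lommelCoeff a b (k + 1) = lommelCoeff a b k / (((k : ℝ) + a) * ((k : ℝ) + b)) := by
  have hk : (0 : ℝ) ≤ k := k.cast_nonneg
  have h1 : (k : ℝ) + a ≠ 0 := by linarith
  have h2 : (k : ℝ) + b ≠ 0 := by linarith
  unfold lommelCoeff
  rw [show ((k + 1 : ℕ) : ℝ) + a = (k + a) + 1 by push_cast; ring,
    show ((k + 1 : ℕ) : ℝ) + b = (k + b) + 1 by push_cast; ring,
    Real.Gamma_add_one h1, Real.Gamma_add_one h2, div_div]
  congr 1
  ring

/-- Since `(k + a) (k + b) ≥ (k + 1) / 2`, the coefficients are dominated by those of an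
exponential series. -/
lemma lommelCoeff_le {a b : ℝ} (ha : 1 < a) (hb : 1 / 2 < b) (k : ℕ) :
    lommelCoeff a b k ≤ lommelCoeff a b 0 * (2 ^ k / (k.factorial : ℝ)) := by
  induction k with
  | zero => simp
  | succ k ih =>
    have hk : (0 : ℝ) ≤ k := k.cast_nonneg
    have hf : (0 : ℝ) < k.factorial := by exact_mod_cast k.factorial_pos
    have hd : ((k : ℝ) + 1) / 2 ≤ ((k : ℝ) + a) * ((k : ℝ) + b) := by nlinarith
    rw [lommelCoeff_succ ha hb, Nat.factorial_succ]
    calc lommelCoeff a b k / (((k : ℝ) + a) * ((k : ℝ) + b))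
        ≤ (lommelCoeff a b 0 * (2 ^ k / (k.factorial : ℝ))) / (((k : ℝ) + 1) / 2) := by
          have := (lommelCoeff_pos ha hb 0).le
          gcongr
      _ = _ := by push_cast; field_simp; ring

lemma summable_lommelEntire {a b : ℝ} (ha : 1 < a) (hb : 1 / 2 < b) (y : ℝ) :
    Summable fun k : ℕ => lommelCoeff a b k * y ^ k := by
  refine Summable.of_norm_bounded
    ((Real.summable_pow_div_factorial (2 * |y|)).mul_left (lommelCoeff a b 0)) fun k => ?_
  rw [norm_mul, norm_pow, Real.norm_eq_abs, Real.norm_eq_abs,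
    abs_of_pos (lommelCoeff_pos ha hb k)]
  calc _ ≤ lommelCoeff a b 0 * (2 ^ k / (k.factorial : ℝ)) * |y| ^ k := by
        gcongr; exact lommelCoeff_le ha hb k
    _ = _ := by rw [mul_pow]; ring

lemma summable_lommelEntireDeriv {a b : ℝ} (ha : 1 < a) (hb : 1 / 2 < b) (y : ℝ) :
    Summable fun k : ℕ => lommelCoeff a b k * (k * y ^ (k - 1)) := by
  refine (summable_nat_add_iff 1).1 ?_
  refine Summable.of_norm_bounded
    ((Real.summable_pow_div_factorial (2 * |y|)).mul_left (2 * lommelCoeff a b 0)) fun k => ?_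
  have hk : (0 : ℝ) < (k + 1 : ℕ) := by positivity
  have hf : (0 : ℝ) < k.factorial := by exact_mod_cast k.factorial_pos
  rw [norm_mul, norm_mul, norm_pow, Real.norm_eq_abs, Real.norm_eq_abs, Real.norm_eq_abs,
    abs_of_pos (lommelCoeff_pos ha hb _), abs_of_pos hk, Nat.add_sub_cancel]
  calc _ ≤ lommelCoeff a b 0 * (2 ^ (k + 1) / ((k + 1).factorial : ℝ)) *
          ((k + 1 : ℕ) * |y| ^ k) := by
        gcongr; exact lommelCoeff_le ha hb _
    _ = _ := by
        rw [mul_pow, Nat.factorial_succ]; push_cast at hk ⊢; field_simp; ring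

lemma hasDerivAt_lommelEntire {a b : ℝ} (ha : 1 < a) (hb : 1 / 2 < b) (y : ℝ) :
    HasDerivAt (lommelEntire a b) (lommelEntireDeriv a b y) y := by
  have hy : y ∈ Metric.ball (0 : ℝ) (|y| + 1) := by simp
  refine hasDerivAt_tsum_of_isPreconnected (t := Metric.ball (0 : ℝ) (|y| + 1))
    (summable_lommelEntireDeriv ha hb (|y| + 1)) Metric.isOpen_ball
    (convex_ball _ _).isPreconnected
    (fun n z _ => (hasDerivAt_pow n z).const_mul (lommelCoeff a b n))
    (fun n z hz => ?_) hy (summable_lommelEntire ha hb y) hy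
  have hz' : |z| ≤ |y| + 1 := by
    have := Metric.mem_ball.1 hz
    rw [dist_zero_right, Real.norm_eq_abs] at this
    exact this.le
  rw [norm_mul, norm_mul, norm_pow, Real.norm_eq_abs, Real.norm_eq_abs, Real.norm_eq_abs,
    abs_of_pos (lommelCoeff_pos ha hb n), abs_of_nonneg n.cast_nonneg]
  have := (lommelCoeff_pos ha hb n).le
  gcongr

lemma mul_lommelEntireDeriv {a b : ℝ} (ha : 1 < a) (hb : 1 / 2 < b) (y : ℝ) :
    HasSum (fun k : ℕ => lommelCoeff a b k * (k * y ^ k)) (y * lommelEntireDeriv a b y) := by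
  have h := (summable_lommelEntireDeriv ha hb y).hasSum.mul_left y
  have e : (fun k : ℕ => lommelCoeff a b k * (k * y ^ k)) =
      fun k : ℕ => y * (lommelCoeff a b k * (k * y ^ (k - 1))) := by
    funext k
    cases k with
    | zero => simp
    | succ k => rw [Nat.add_sub_cancel]; ring
  rw [e]
  exact h

lemma lommelEntire_pos {a b : ℝ} (ha : 1 < a) (hb : 1 / 2 < b) {y : ℝ} (hy : 0 ≤ y) :
    0 < lommelEntire a b y :=
  (summable_lommelEntire ha hb y).tsum_pos
    (fun k => mul_nonneg (lommelCoeff_pos ha hb k).le (pow_nonneg hy k)) 0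
    (by simpa using lommelCoeff_pos ha hb 0)

lemma lommelEntireDeriv_nonneg {a b : ℝ} (ha : 1 < a) (hb : 1 / 2 < b) {y : ℝ} (hy : 0 ≤ y) :
    0 ≤ lommelEntireDeriv a b y :=
  tsum_nonneg fun k => mul_nonneg (lommelCoeff_pos ha hb k).le (by positivity)

/-- The contiguity relation `y S' + b S = S₋`, where `S` has parameters `(a, b + 1)` and `S₋` has
parameters `(a, b)`; it encodes `(x^(ν+1) t_{μ+1,ν+1})' = x^(ν+1) t_{μ,ν}`. -/
lemma lommelEntire_contiguous {a b : ℝ} (ha : 1 < a) (hb : 1 / 2 < b) (y : ℝ) :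
    y * lommelEntireDeriv a (b + 1) y + b * lommelEntire a (b + 1) y = lommelEntire a b y := by
  have hb' : 1 / 2 < b + 1 := by linarith
  have h := (mul_lommelEntireDeriv ha hb' y).add
    ((summable_lommelEntire ha hb' y).hasSum.mul_left b)
  refine h.tsum_eq.symm.trans (tsum_congr fun k => ?_)
  have hk : (0 : ℝ) ≤ k := k.cast_nonneg
  have h2 : (k : ℝ) + b ≠ 0 := by linarith
  have e : lommelCoeff a b k = (k + b) * lommelCoeff a (b + 1) k := by
    unfold lommelCoeff
    rw [show (k : ℝ) + (b + 1) = (k + b) + 1 by ring, Real.Gamma_add_one h2]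
    field_simp
  rw [e]; ring

/-- The second contiguity relation. The modified Lommel equation is inhomogeneous, so only an
inequality survives after dropping the nonnegative term `1 / (Γ(a-1) Γ(b))`. -/
lemma lommelEntire_contiguous_le {a b : ℝ} (ha : 1 < a) (hb : 1 / 2 < b) (y : ℝ) :
    y * lommelEntire a (b + 1) y ≤ y * lommelEntireDeriv a b y + (a - 1) * lommelEntire a b y := by
  have hb' : 1 / 2 < b + 1 := by linarith
  have h := (mul_lommelEntireDeriv ha hb y).add
    ((summable_lommelEntire ha hb y).hasSum.mul_left (a - 1))
  unfold lommelEntire at h ⊢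
  rw [← h.tsum_eq, h.summable.tsum_eq_zero_add, ← tsum_mul_left]
  have e : ∀ k : ℕ, lommelCoeff a b (k + 1) * (((k + 1 : ℕ) : ℝ) * y ^ (k + 1)) +
      (a - 1) * (lommelCoeff a b (k + 1) * y ^ (k + 1)) =
      y * (lommelCoeff a (b + 1) k * y ^ k) := by
    intro k
    have hk : (0 : ℝ) ≤ k := k.cast_nonneg
    have h2 : (k : ℝ) + a ≠ 0 := by linarith
    have e : (k + a) * lommelCoeff a b (k + 1) = lommelCoeff a (b + 1) k := by
      unfold lommelCoeff
      rw [show ((k + 1 : ℕ) : ℝ) + a = (k + a) + 1 by push_cast; ring,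
        show ((k + 1 : ℕ) : ℝ) + b = k + (b + 1) by push_cast; ring, Real.Gamma_add_one h2]
      field_simp
    rw [← e]; push_cast; ring
  simp only [e]
  have h0 := lommelCoeff_pos ha hb 0
  have : 0 ≤ (a - 1) * lommelCoeff a b 0 := mul_nonneg (by linarith) h0.le
  simpa using this

lemma lommel_eq {μ ν x : ℝ} (hx : 0 < x) :
    lommel μ ν x = (x / 2) ^ (μ + 1) *
      lommelEntire ((μ - ν + 3) / 2) ((μ + ν + 3) / 2) (x ^ 2 / 4) := by
  unfold lommel lommelEntire lommelCoeff
  rw [← tsum_mul_left]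
  refine tsum_congr fun k => ?_
  have hx2 : 0 < x / 2 := by positivity
  rw [show μ + 2 * (k : ℝ) + 1 = (μ + 1) + ((2 * k : ℕ) : ℝ) by push_cast; ring,
    Real.rpow_add hx2, Real.rpow_natCast, pow_mul, show (x / 2) ^ 2 = x ^ 2 / 4 by ring]
  ring

/-! ### A first-order system of differential inequalities -/

lemma hasDerivAt_comp_sq {a b : ℝ} (ha : 1 < a) (hb : 1 / 2 < b) (x : ℝ) :
    HasDerivAt (fun x => lommelEntire a b (x ^ 2 / 4))
      (lommelEntireDeriv a b (x ^ 2 / 4) * (x / 2)) x := by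
  have h : HasDerivAt (fun x : ℝ => x ^ 2 / 4) (x / 2) x := by
    refine ((hasDerivAt_pow 2 x).div_const 4).congr_deriv ?_
    norm_num; ring
  exact HasDerivAt.comp x (hasDerivAt_lommelEntire ha hb (x ^ 2 / 4)) h

/-- On the half-line, a continuous function starting at `0` whose derivative is nonnegative wherever
the function is negative stays nonnegative. -/
lemma nonneg_of_deriv_nonneg_of_neg {F F' : ℝ → ℝ} (hc : ContinuousOn F (Set.Ici 0))
    (h0 : 0 ≤ F 0) (hd : ∀ x, 0 < x → HasDerivAt F (F' x) x)
    (hF : ∀ x, 0 < x → F x < 0 → 0 ≤ F' x) {X : ℝ} (hX : 0 ≤ X) : 0 ≤ F X := by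
  have hc' : ContinuousOn F (Set.Icc 0 X) := hc.mono Set.Icc_subset_Ici_self
  have hK : IsCompact (Set.Icc 0 X ∩ F ⁻¹' Set.Ici 0) :=
    isCompact_Icc.of_isClosed_subset (hc'.preimage_isClosed_of_isClosed isClosed_Icc isClosed_Ici)
      Set.inter_subset_left
  obtain ⟨x₀, ⟨⟨hx0, hxX⟩, hFx⟩, hmax⟩ := hK.exists_isGreatest ⟨0, ⟨le_rfl, hX⟩, h0⟩
  -- Beyond the last point `x₀` where `F` is nonnegative, `F` is negative, hence monotone.
  have hneg : ∀ x ∈ Set.Ioc x₀ X, F x < 0 := fun x hx => by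
    by_contra! h
    exact absurd (hmax ⟨⟨hx0.trans hx.1.le, hx.2⟩, h⟩) (not_le.2 hx.1)
  have hm : MonotoneOn F (Set.Icc x₀ X) := by
    refine monotoneOn_of_hasDerivWithinAt_nonneg (f' := F') (convex_Icc _ _)
      (hc.mono fun x hx => hx0.trans hx.1) (fun x hx => ?_) (fun x hx => ?_) <;>
      rw [interior_Icc] at hx
    · exact (hd x (hx0.trans_lt hx.1)).hasDerivWithinAt
    · exact hF x (hx0.trans_lt hx.1) (hneg x ⟨hx.1, hx.2.le⟩)
  exact le_trans hFx (hm ⟨le_rfl, hxX⟩ ⟨hxX, le_rfl⟩ hxX)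

section System

/-! Up to powers of `x`, `P` plays the role of `t_{μ,ν}` and `x V` that of `t_{μ+1,ν+1}`, with
`α = (μ - ν + 1) / 2` and `κ = μ + ν + 2`, so that `κ - 2 α = 2 ν + 1`. -/

/-- The analogue of `t_{μ+1,ν+1} ≤ t_{μ,ν}` for `ν > -1/2`. -/
lemma mul_le_of_system {P P' V V' : ℝ → ℝ} {α κ : ℝ} (hα : 0 < α) (hκ : 2 * α ≤ κ)
    (hV0 : ∀ x, 0 ≤ V x)
    (hP : ∀ x, HasDerivAt P (P' x) x) (hV : ∀ x, HasDerivAt V (V' x) x)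
    (hPeq : ∀ x, x ^ 2 * V x - 2 * α * P x ≤ x * P' x)
    (hVeq : ∀ x, x * V' x = P x - (κ + 1) * V x) {x : ℝ} (hx : 0 < x) : x * V x ≤ P x := by
  -- The integrating factor comes from `W' ≥ -(1 + 2α/x) W`, where `W = P - x V`.
  have hc : Continuous fun x => Real.exp x * x ^ (2 * α) * (P x - x * V x) := by
    have h1 : Continuous P := continuous_iff_continuousAt.2 fun x => (hP x).continuousAt
    have h2 : Continuous V := continuous_iff_continuousAt.2 fun x => (hV x).continuousAt
    have h3 : Continuous fun x : ℝ => x ^ (2 * α) := Real.continuous_rpow_const (by linarith)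
    fun_prop
  have hd : ∀ x, 0 < x → HasDerivAt (fun x => Real.exp x * x ^ (2 * α) * (P x - x * V x))
      ((Real.exp x * x ^ (2 * α) + Real.exp x * (2 * α * x ^ (2 * α - 1))) * (P x - x * V x) +
        Real.exp x * x ^ (2 * α) * (P' x - (1 * V x + x * V' x))) x := fun x hx =>
    ((Real.hasDerivAt_exp x).mul (Real.hasDerivAt_rpow_const (Or.inl hx.ne'))).mul
      ((hP x).sub ((hasDerivAt_id x).mul (hV x)))
  have h := nonneg_of_deriv_nonneg_of_neg hc.continuousOn
    (by simp [Real.zero_rpow (show 2 * α ≠ 0 by linarith)]) hd (fun x hx _ => ?_) hx.le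
  · have he := mul_pos (Real.exp_pos x) (Real.rpow_pos_of_pos hx (2 * α))
    have := nonneg_of_mul_nonneg_right h he
    linarith
  · have he := mul_pos (Real.exp_pos x) (Real.rpow_pos_of_pos hx (2 * α))
    rw [Real.rpow_sub_one hx.ne', show
      (Real.exp x * x ^ (2 * α) + Real.exp x * (2 * α * (x ^ (2 * α) / x))) * (P x - x * V x) +
        Real.exp x * x ^ (2 * α) * (P' x - (1 * V x + x * V' x)) =
      Real.exp x * x ^ (2 * α) / x *
        ((x + 2 * α) * (P x - x * V x) + (x * P' x - x * V x - x * (x * V' x))) by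
        field_simp; ring]
    refine mul_nonneg (by positivity) ?_
    rw [hVeq]
    nlinarith [hPeq x, mul_nonneg (mul_nonneg hx.le (hV0 x)) (sub_nonneg.2 hκ)]

/-- The integral inequality for the system, with the constant `(q + 2) / (q (1 - β))`,
`q = κ - 2 α`. -/
lemma integral_le_of_system {P P' V V' : ℝ → ℝ} {α κ β : ℝ} (hα : 0 < α) (hκ : 2 * α < κ)
    (hβ0 : 0 < β) (hβ1 : β < 1) (hV0 : ∀ x, 0 < V x)
    (hP : ∀ x, HasDerivAt P (P' x) x) (hV : ∀ x, HasDerivAt V (V' x) x)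
    (hPeq : ∀ x, x ^ 2 * V x - 2 * α * P x ≤ x * P' x)
    (hVeq : ∀ x, x * V' x = P x - (κ + 1) * V x)
    (hVP : ∀ x, (κ + 1) * V x ≤ P x) {x : ℝ} (hx : 0 < x) :
    ∫ u in (0:ℝ)..x, Real.exp (-β * u) * P u * u ^ (κ - 1) ≤
      (κ - 2 * α + 2) / ((κ - 2 * α) * (1 - β)) * (Real.exp (-β * x) * x ^ κ * V x) := by
  obtain ⟨q, hq⟩ : ∃ q, q = κ - 2 * α := ⟨_, rfl⟩
  rw [← hq]
  have hq0 : 0 < q := by linarith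
  have hσ0 : 0 < 1 - β := by linarith
  have cP : Continuous P := continuous_iff_continuousAt.2 fun x => (hP x).continuousAt
  have cV : Continuous V := continuous_iff_continuousAt.2 fun x => (hV x).continuousAt
  have cκ : Continuous fun x : ℝ => x ^ κ := Real.continuous_rpow_const (by linarith)
  have hint : ∀ a b : ℝ, IntervalIntegrable
      (fun u => Real.exp (-β * u) * P u * u ^ (κ - 1)) volume a b := fun a b =>
    (intervalIntegral.intervalIntegrable_rpow' (by linarith)).continuousOn_mul
      (by fun_prop : Continuous fun u => Real.exp (-β * u) * P u).continuousOn
  obtain ⟨L, hL⟩ : ∃ L : ℝ → ℝ, L = fun x => ∫ u in (0:ℝ)..x,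
    Real.exp (-β * u) * P u * u ^ (κ - 1) := ⟨_, rfl⟩
  have cL : Continuous L := hL ▸ intervalIntegral.continuous_primitive hint 0
  have hL0 : L 0 = 0 := by simp [hL]
  have dL : ∀ x, 0 < x → HasDerivAt L (Real.exp (-β * x) * P x * x ^ (κ - 1)) x := by
    intro x hx
    have hcon : ContinuousOn (fun u => Real.exp (-β * u) * P u * u ^ (κ - 1)) (Set.Ioi 0) :=
      (by fun_prop : Continuous fun u => Real.exp (-β * u) * P u).continuousOn.mul
        (continuousOn_id.rpow_const fun u hu => Or.inl (ne_of_gt hu))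
    rw [hL]
    exact intervalIntegral.integral_hasDerivAt_right (hint 0 x)
      (hcon.stronglyMeasurableAtFilter isOpen_Ioi x hx) (hcon.continuousAt (Ioi_mem_nhds hx))
  have dE : ∀ x, 0 < x → HasDerivAt (fun x => Real.exp (-β * x) * x ^ κ)
      (Real.exp (-β * x) * x ^ (κ - 1) * (κ - β * x)) x := by
    intro x hx
    have h1 : HasDerivAt (fun x => Real.exp (-β * x)) (Real.exp (-β * x) * -β) x := by
      simpa using ((hasDerivAt_id x).const_mul (-β)).exp
    refine (h1.mul (Real.hasDerivAt_rpow_const (p := κ) (Or.inl hx.ne'))).congr_deriv ?_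
    rw [Real.rpow_sub_one hx.ne']; field_simp; ring
  have hxκ : ∀ x, 0 < x → Real.exp (-β * x) * x ^ κ = Real.exp (-β * x) * x ^ (κ - 1) * x := by
    intro x hx
    rw [Real.rpow_sub_one hx.ne']; field_simp
  have hpos : ∀ x, 0 < x → 0 < Real.exp (-β * x) * x ^ (κ - 1) := fun x hx =>
    mul_pos (Real.exp_pos _) (Real.rpow_pos_of_pos hx _)
  -- For the modified Bessel functions and `β = 1` this bound is an identity.
  have hΦ : ∀ x, 0 < x → q * L x ≤ Real.exp (-β * x) * x ^ κ * (P x + x * V x) := by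
    intro x hx
    have h := nonneg_of_deriv_nonneg_of_neg (X := x)
      (F := fun x => Real.exp (-β * x) * x ^ κ * (P x + x * V x) - q * L x)
      (by fun_prop) (by simp [hL0, Real.zero_rpow (show κ ≠ 0 by linarith)])
      (fun x hx => ((dE x hx).mul ((hP x).add ((hasDerivAt_id x).mul (hV x)))).sub
        ((dL x hx).const_mul q)) (fun x hx _ => ?_) hx.le
    · linarith
    · rw [show (P + id * V : ℝ → ℝ) x = P x + x * V x from rfl, id, hxκ x hx, show Real.exp (-β * x) * x ^ (κ - 1) * (κ - β * x) * (P x + x * V x) +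
        Real.exp (-β * x) * x ^ (κ - 1) * x * (P' x + (1 * V x + x * V' x)) -
        q * (Real.exp (-β * x) * P x * x ^ (κ - 1)) =
        Real.exp (-β * x) * x ^ (κ - 1) * ((κ - β * x) * (P x + x * V x) + x * P' x +
          x * V x + x * (x * V' x) - q * P x) by ring]
      refine mul_nonneg (hpos x hx).le ?_
      have hPV : 0 ≤ P x + x * V x := by
        have := hVP x
        have := hV0 x
        have : 0 ≤ (κ + 1) * V x := by apply mul_nonneg <;> linarith
        have : 0 ≤ x * V x := by positivity
        linarith
      rw [hVeq, hq]
      nlinarith [hPeq x, mul_nonneg (mul_nonneg hσ0.le hx.le) hPV]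
  have hF := nonneg_of_deriv_nonneg_of_neg (X := x)
    (F := fun x => (q + 2) / (q * (1 - β)) * (Real.exp (-β * x) * x ^ κ * V x) - L x)
    (by fun_prop) (by simp [hL0, Real.zero_rpow (show κ ≠ 0 by linarith)])
    (fun x hx => (((dE x hx).mul (hV x)).const_mul ((q + 2) / (q * (1 - β)))).sub
      (dL x hx)) (fun x hx hneg => ?_) hx.le
  · rw [hL] at hF
    linarith
  · rw [hxκ x hx, show (q + 2) / (q * (1 - β)) *
        (Real.exp (-β * x) * x ^ (κ - 1) * (κ - β * x) * V x +
          Real.exp (-β * x) * x ^ (κ - 1) * x * V' x) - Real.exp (-β * x) * P x * x ^ (κ - 1) =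
        Real.exp (-β * x) * x ^ (κ - 1) / (q * (1 - β)) *
          ((q + 2) * ((κ - β * x) * V x + x * V' x) - q * (1 - β) * P x) by field_simp]
    refine mul_nonneg (div_nonneg (hpos x hx).le (by positivity)) ?_
    rw [hVeq]
    -- Where the claim fails, the bound `hΦ` forces `1 - β` to exceed `(q + 2) V / (P + x V)`.
    have h1 : (q + 2) * V x < (1 - β) * (P x + x * V x) := by
      have h2 := hΦ x hx
      have h3 : q * ((q + 2) / (q * (1 - β)) * (Real.exp (-β * x) * x ^ κ * V x)) < q * L x :=
        mul_lt_mul_of_pos_left (by linarith) hq0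
      have h4 := h3.trans_le h2
      rw [show q * ((q + 2) / (q * (1 - β)) * (Real.exp (-β * x) * x ^ κ * V x)) =
        Real.exp (-β * x) * x ^ κ * ((q + 2) * V x / (1 - β)) by field_simp] at h4
      have h5 := lt_of_mul_lt_mul_left h4
        (mul_pos (Real.exp_pos (-β * x)) (Real.rpow_pos_of_pos hx κ)).le
      rw [div_lt_iff₀ hσ0] at h5
      linarith
    have h6 : x * V x ≤ P x := mul_le_of_system hα hκ.le (fun x => (hV0 x).le) hP hV hPeq hVeq hx
    have h7 : (q + 1) * V x ≤ P x := by nlinarith [hVP x, hV0 x]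
    have hVx := hV0 x
    have hxV : 0 < x * V x := by positivity
    have hPx : 0 < P x := by linarith
    suffices h : (1 - β) * (q * P x - (q + 2) * (x * V x)) ≤ (q + 2) * (P x - V x - x * V x) by
      nlinarith
    rcases le_total 0 (q * P x - (q + 2) * (x * V x)) with h8 | h8
    · have : (1 - β) * (q * P x - (q + 2) * (x * V x)) ≤ q * P x - (q + 2) * (x * V x) :=
        mul_le_of_le_one_left h8 (by linarith)
      nlinarith
    · have hs : 0 < P x + x * V x := by linarith
      refine le_of_mul_le_mul_left ?_ hs
      have h9 := mul_le_mul_of_nonpos_right h1.le h8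
      -- After inserting the lower bound for `1 - β`, the difference of the two sides factors.
      have h10 : 0 ≤ (q + 2) * ((P x - x * V x) * (P x + x * V x - (q + 1) * V x)) :=
        mul_nonneg (by linarith) (mul_nonneg (by linarith) (by linarith))
      nlinarith

end System

/-! ### The integral inequality for the Lommel function -/

/-- The sum of `1 < A_{μ,ν}` and `2 ν + 2 < μ + ν + 3`. -/
lemma two_mul_add_three_lt_const {μ ν : ℝ} (hν1 : -1/2 < ν) (hν2 : ν < μ + 1) :
    2 * ν + 3 < μ + ν + 3 + ((μ - ν) / 2 + Real.sqrt ((μ - ν) ^ 2 + 8 * (μ + ν + 3)) / 2) := by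
  have : 2 - (μ - ν) < Real.sqrt ((μ - ν) ^ 2 + 8 * (μ + ν + 3)) :=
    Real.lt_sqrt_of_sq_lt (by nlinarith)
  linarith

theorem stmt2 (μ ν β : ℝ) (hμ : μ > -3/2) (hν1 : -1/2 < ν) (hν2 : ν < μ + 1)
    (hβ1 : 0 < β) (hβ2 : β < 1) :
    ∀ x : ℝ, 0 < x →
      ∫ u in (0:ℝ)..x, Real.exp (-β * u) * u ^ ν * lommel μ ν u <
        (μ + ν + 3 + ((μ - ν) / 2 + Real.sqrt ((μ - ν) ^ 2 + 8 * (μ + ν + 3)) / 2)) /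
            ((2 * ν + 1) * (1 - β)) *
          (Real.exp (-β * x) * x ^ ν * lommel (μ + 1) (ν + 1) x) := by
  intro x hx
  obtain ⟨a, ha⟩ : ∃ a, a = (μ - ν + 3) / 2 := ⟨_, rfl⟩
  obtain ⟨b, hb⟩ : ∃ b, b = (μ + ν + 3) / 2 := ⟨_, rfl⟩
  have ha1 : 1 < a := by linarith
  have hb1 : 1 / 2 < b := by linarith
  have hb2 : 1 / 2 < b + 1 := by linarith
  have hy : ∀ x : ℝ, 0 ≤ x ^ 2 / 4 := fun x => by positivity
  have hV0 : ∀ x, 0 < lommelEntire a (b + 1) (x ^ 2 / 4) / 2 := fun x =>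
    half_pos (lommelEntire_pos ha1 hb2 (hy x))
  have key := integral_le_of_system (α := a - 1) (κ := 2 * b - 1) (by linarith) (by linarith)
    hβ1 hβ2 hV0 (fun x => hasDerivAt_comp_sq ha1 hb1 x)
    (fun x => (hasDerivAt_comp_sq ha1 hb2 x).div_const 2)
    (fun x => by linarith [lommelEntire_contiguous_le ha1 hb1 (x ^ 2 / 4)])
    (fun x => by linarith [lommelEntire_contiguous ha1 hb1 (x ^ 2 / 4)])
    (fun x => by
      linarith [lommelEntire_contiguous ha1 hb1 (x ^ 2 / 4),
        mul_nonneg (hy x) (lommelEntireDeriv_nonneg ha1 hb2 (hy x))]) hx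
  -- The common factor `2^(-(μ+1))` relates `t` to its entire part.
  obtain ⟨c, hc⟩ : ∃ c : ℝ, c = (1 / 2) ^ (μ + 1) := ⟨_, rfl⟩
  have hc0 : 0 < c := hc ▸ Real.rpow_pos_of_pos (by norm_num) _
  have hpow : ∀ u : ℝ, 0 < u → u ^ ν * (u / 2) ^ (μ + 1) = c * u ^ (2 * b - 1 - 1) := by
    intro u hu
    rw [div_eq_mul_one_div, Real.mul_rpow hu.le (by norm_num), ← hc,
      show 2 * b - 1 - 1 = ν + (μ + 1) by linarith, Real.rpow_add hu ν (μ + 1)]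
    ring
  have hI : ∫ u in (0:ℝ)..x, Real.exp (-β * u) * u ^ ν * lommel μ ν u =
      c * ∫ u in (0:ℝ)..x,
        Real.exp (-β * u) * lommelEntire a b (u ^ 2 / 4) * u ^ (2 * b - 1 - 1) := by
    rw [← intervalIntegral.integral_const_mul]
    refine intervalIntegral.integral_congr_uIoo fun u hu => ?_
    have hu0 : 0 < u := by
      rw [Set.uIoo_of_le hx.le] at hu
      exact hu.1
    rw [lommel_eq hu0, ← ha, ← hb, mul_assoc, ← mul_assoc (u ^ ν), hpow u hu0]
    ring
  have hT : Real.exp (-β * x) * x ^ ν * lommel (μ + 1) (ν + 1) x =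
      c * (Real.exp (-β * x) * x ^ (2 * b - 1) * (lommelEntire a (b + 1) (x ^ 2 / 4) / 2)) := by
    rw [lommel_eq hx, show (μ + 1 - (ν + 1) + 3) / 2 = a by linarith,
      show (μ + 1 + (ν + 1) + 3) / 2 = b + 1 by linarith,
      Real.rpow_add_one (by positivity : x / 2 ≠ 0), mul_assoc, ← mul_assoc (x ^ ν),
      ← mul_assoc (x ^ ν), hpow x hx, Real.rpow_sub_one hx.ne' (2 * b - 1)]
    field_simp
  rw [hI, hT]
  have hG : 0 < Real.exp (-β * x) * x ^ (2 * b - 1) *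
      (lommelEntire a (b + 1) (x ^ 2 / 4) / 2) :=
    mul_pos (mul_pos (Real.exp_pos _) (Real.rpow_pos_of_pos hx _)) (hV0 x)
  rw [show 2 * b - 1 - 2 * (a - 1) = 2 * ν + 1 by linarith] at key
  refine (mul_le_mul_of_nonneg_left key hc0.le).trans_lt ?_
  rw [mul_left_comm]
  have h1 : 0 < (2 * ν + 1) * (1 - β) := mul_pos (by linarith) (by linarith)
  have h2 := two_mul_add_three_lt_const hν1 hν2
  exact mul_lt_mul_of_pos_right (div_lt_div_of_pos_right (by linarith) h1) (mul_pos hc0 hG)
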